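/- arXiv:1703.04379 — 2 statements merged into one kernel-verified Lean document; each statement's English description precedes it below -/
import Mathlib

section
/- Let γ > 0 and γ_α > 0. The density p(θ,r,α,r_α) = exp(−H_e(θ,r,α,r_α)) is annihilated by the Fokker–Planck operator of the continuously tempered Langevin dynamics: for every (θ,r,α,r_α) ∈ ℝ^d × ℝ^d × ℝ × ℝ, −∑_{i=1}^d r_i ∂_{θ_i} p + ∑_{i=1}^d ∂_{r_i}[(∂_{θ_i}U(θ) + γ r_i) p] − r_α ∂_α p + ∂_{r_α}[(γ_α r_α − h(θ,r,α)) p] + (γ / g(α)) ∑_{i=1}^d ∂²_{r_i} p + γ_α ∂²_{r_α} p = 0. Hence exp(−H_e) is a stationary (unnormalized) density of the dynamics dθ = r dt, dr = −∇U(θ) dt − γ r dt + √(2γ/g(α)) dW, dα = r_α dt, dr_α = h dt − γ_α r_α dt + √(2γ_α) dW_α. -/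
open scoped BigOperators

/-- Partial derivative of `f : (Fin d → ℝ) → ℝ` at `x` in the `i`-th coordinate. -/
noncomputable def pd {d : ℕ} (f : (Fin d → ℝ) → ℝ) (x : Fin d → ℝ) (i : Fin d) : ℝ :=
  deriv (fun s => f (Function.update x i s)) (x i)

/-- The Hamiltonian `H(θ,r) = U(θ) + ‖r‖²/2`. -/
noncomputable def Hfun {d : ℕ} (U : (Fin d → ℝ) → ℝ) (θ r : Fin d → ℝ) : ℝ :=
  U θ + (∑ i, (r i) ^ 2) / 2

/-- The extended Hamiltonian `H_e(θ,r,α,r_α) = g(α)H(θ,r) + φ(α) + r_α²/2`. -/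
noncomputable def Hext {d : ℕ} (U : (Fin d → ℝ) → ℝ) (g φ : ℝ → ℝ)
    (θ r : Fin d → ℝ) (a ra : ℝ) : ℝ :=
  g a * Hfun U θ r + φ a + ra ^ 2 / 2

/-- The coupling function `h(θ,r,α) = −g′(α)H(θ,r) − φ′(α)`. -/
noncomputable def hcpl {d : ℕ} (U : (Fin d → ℝ) → ℝ) (g φ : ℝ → ℝ)
    (θ r : Fin d → ℝ) (a : ℝ) : ℝ :=
  -(deriv g a) * Hfun U θ r - deriv φ a

/-- The unnormalized stationary density `p = exp(−H_e)`. -/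
noncomputable def pdens {d : ℕ} (U : (Fin d → ℝ) → ℝ) (g φ : ℝ → ℝ)
    (θ r : Fin d → ℝ) (a ra : ℝ) : ℝ :=
  Real.exp (-(Hext U g φ θ r a ra))

theorem aux_r {d : ℕ} (U : (Fin d → ℝ) → ℝ) (g φ : ℝ → ℝ)
    (θ r : Fin d → ℝ) (a ra : ℝ) (i : Fin d) (s : ℝ) :
    HasDerivAt (fun s => pdens U g φ θ (Function.update r i s) a ra)
      (-(g a * s) * pdens U g φ θ (Function.update r i s) a ra) s := by
  have h1 : HasDerivAt (fun s => ∑ j, (Function.update r i s j) ^ 2) (2 * s) s := by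
    have h2 : ∀ t : ℝ, ∑ j, (Function.update r i t j) ^ 2
        = t ^ 2 + ∑ j ∈ Finset.univ.erase i, (r j) ^ 2 := by
      intro t
      rw [← Finset.add_sum_erase _ _ (Finset.mem_univ i)]
      congr 1
      · simp
      · apply Finset.sum_congr rfl
        intro j hj
        rw [Function.update_of_ne (Finset.ne_of_mem_erase hj)]
    simp only [h2]
    simpa using ((hasDerivAt_pow 2 s).add_const (∑ j ∈ Finset.univ.erase i, (r j) ^ 2))
  have h3 := ((((((h1.div_const 2).const_add (U θ)).const_mul (g a)).add_const (φ a)).add_const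
    (ra ^ 2 / 2)).neg).exp
  unfold pdens Hext Hfun
  refine HasDerivAt.congr_deriv h3 ?_
  simp only [Pi.neg_apply]
  ring

theorem aux_ra {d : ℕ} (U : (Fin d → ℝ) → ℝ) (g φ : ℝ → ℝ)
    (θ r : Fin d → ℝ) (a s : ℝ) :
    HasDerivAt (fun s => pdens U g φ θ r a s) (-s * pdens U g φ θ r a s) s := by
  have h3 := ((((hasDerivAt_pow 2 s).div_const 2).const_add (g a * Hfun U θ r + φ a)).neg).exp
  unfold pdens Hext
  refine HasDerivAt.congr_deriv h3 ?_
  simp only [Pi.neg_apply]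
  push_cast
  ring

theorem aux_a {d : ℕ} (U : (Fin d → ℝ) → ℝ) (g φ : ℝ → ℝ)
    (hg : ContDiff ℝ 1 g) (hφ : ContDiff ℝ 1 φ) (θ r : Fin d → ℝ) (a ra : ℝ) :
    HasDerivAt (fun s => pdens U g φ θ r s ra)
      (hcpl U g φ θ r a * pdens U g φ θ r a ra) a := by
  have hg' := (hg.differentiable one_ne_zero a).hasDerivAt
  have hφ' := (hφ.differentiable one_ne_zero a).hasDerivAt
  have h3 := ((((hg'.mul_const (Hfun U θ r)).add hφ').add_const (ra ^ 2 / 2)).neg).exp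
  unfold pdens Hext hcpl
  refine HasDerivAt.congr_deriv h3 ?_
  simp only [Pi.add_apply, Pi.neg_apply]
  ring

theorem aux_θ {d : ℕ} (U : (Fin d → ℝ) → ℝ) (hU : ContDiff ℝ 1 U) (g φ : ℝ → ℝ)
    (θ r : Fin d → ℝ) (a ra : ℝ) (i : Fin d) :
    pd (fun θ' => pdens U g φ θ' r a ra) θ i = -(g a * pd U θ i) * pdens U g φ θ r a ra := by
  have h0 : HasDerivAt (fun s => U (Function.update θ i s)) (pd U θ i) (θ i) := by
    have : DifferentiableAt ℝ (fun s => U (Function.update θ i s)) (θ i) :=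
      DifferentiableAt.comp (θ i) (hU.differentiable one_ne_zero _)
        (hasDerivAt_update θ i (θ i)).differentiableAt
    exact this.hasDerivAt
  have h3 := ((((((h0.add_const ((∑ i, (r i) ^ 2) / 2)).const_mul (g a)).add_const
    (φ a)).add_const (ra ^ 2 / 2)).neg).exp).deriv
  unfold pd at h3 ⊢
  unfold pdens Hext Hfun
  refine Eq.trans h3 ?_
  simp only [Pi.neg_apply, Function.update_eq_self]
  ring

/-- The density `p = exp(−H_e)` is annihilated by the Fokker–Planck operator of the
continuously tempered Langevin dynamics
`dθ = r dt, dr = −∇U dt − γ r dt + √(2γ/g(α)) dW, dα = r_α dt,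
 dr_α = h dt − γ_α r_α dt + √(2γ_α) dW_α`;
hence `exp(−H_e)` is a stationary (unnormalized) density of this dynamics. -/
theorem ctld_stationary_density
    {d : ℕ} (hd : 1 ≤ d)
    (U : (Fin d → ℝ) → ℝ) (hU : ContDiff ℝ 1 U)
    (g φ : ℝ → ℝ) (hg : ContDiff ℝ 1 g) (hφ : ContDiff ℝ 1 φ)
    (hgpos : ∀ a : ℝ, 0 < g a)
    (γ γα : ℝ) (hγ : 0 < γ) (hγα : 0 < γα) :
    ∀ (θ r : Fin d → ℝ) (a ra : ℝ),
      -(∑ i, r i * pd (fun θ' => pdens U g φ θ' r a ra) θ i)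
      + (∑ i, pd (fun r' => (pd U θ i + γ * r' i) * pdens U g φ θ r' a ra) r i)
      - ra * deriv (fun s => pdens U g φ θ r s ra) a
      + deriv (fun s => (γα * s - hcpl U g φ θ r a) * pdens U g φ θ r a s) ra
      + (γ / g a) * (∑ i, pd (fun r' => pd (fun r'' => pdens U g φ θ r'' a ra) r' i) r i)
      + γα * deriv (deriv (fun s => pdens U g φ θ r a s)) ra = 0 := by
  intro θ r a ra
  have hga : g a ≠ 0 := (hgpos a).ne'
  have e1 : ∀ i, pd (fun r' => (pd U θ i + γ * r' i) * pdens U g φ θ r' a ra) r i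
      = (γ - (pd U θ i + γ * r i) * (g a * r i)) * pdens U g φ θ r a ra := by
    intro i
    have h := ((((hasDerivAt_id (r i)).const_mul γ).const_add (pd U θ i)).mul
      (aux_r U g φ θ r a ra i (r i))).deriv
    conv_lhs => unfold pd
    simp only [Function.update_self]
    refine Eq.trans h ?_
    simp only [Function.update_eq_self, id]
    ring
  have e2 : ∀ r' : Fin d → ℝ, ∀ i, pd (fun r'' => pdens U g φ θ r'' a ra) r' i
      = -(g a * r' i) * pdens U g φ θ r' a ra := by
    intro r' i
    have h := (aux_r U g φ θ r' a ra i (r' i)).deriv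
    rw [Function.update_eq_self] at h
    exact h
  have e3 : ∀ i, pd (fun r' => pd (fun r'' => pdens U g φ θ r'' a ra) r' i) r i
      = (-(g a) + (g a * r i) ^ 2) * pdens U g φ θ r a ra := by
    intro i
    simp only [e2]
    have h := ((((hasDerivAt_id (r i)).const_mul (g a)).neg).mul
      (aux_r U g φ θ r a ra i (r i))).deriv
    unfold pd
    simp only [Function.update_self]
    refine Eq.trans h ?_
    simp only [Function.update_eq_self, id, Pi.neg_apply]
    ring
  have e4 : deriv (fun s => (γα * s - hcpl U g φ θ r a) * pdens U g φ θ r a s) ra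
      = (γα - (γα * ra - hcpl U g φ θ r a) * ra) * pdens U g φ θ r a ra := by
    have h := ((((hasDerivAt_id ra).const_mul γα).sub_const (hcpl U g φ θ r a)).mul
      (aux_ra U g φ θ r a ra)).deriv
    refine Eq.trans h ?_
    simp only [id]
    ring
  have e5 : deriv (deriv (fun s => pdens U g φ θ r a s)) ra
      = (-1 + ra ^ 2) * pdens U g φ θ r a ra := by
    have h0 : deriv (fun s => pdens U g φ θ r a s) = fun s => -s * pdens U g φ θ r a s :=
      funext fun s => (aux_ra U g φ θ r a s).deriv
    rw [h0]
    refine Eq.trans (((hasDerivAt_id ra).neg).mul (aux_ra U g φ θ r a ra)).deriv ?_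
    simp only [id, Pi.neg_apply]
    ring
  rw [e4, e5, (aux_a U g φ hg hφ θ r a ra).deriv]
  simp only [e1, e3, aux_θ U hU]
  have key : -(∑ i, r i * (-(g a * pd U θ i) * pdens U g φ θ r a ra))
      + (∑ i, (γ - (pd U θ i + γ * r i) * (g a * r i)) * pdens U g φ θ r a ra)
      + (γ / g a) * (∑ i, (-(g a) + (g a * r i) ^ 2) * pdens U g φ θ r a ra) = 0 := by
    rw [Finset.mul_sum, ← Finset.sum_neg_distrib, ← Finset.sum_add_distrib,
      ← Finset.sum_add_distrib]
    apply Finset.sum_eq_zero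
    intro i _
    field_simp
    ring
  linear_combination key
end

section
/- On the slice where the temperature scaling equals one, the extended stationary density recovers the desired target distribution over θ: for every α with g(α) = 1 and every θ ∈ ℝ^d, ∫_ℝ ∫_{ℝ^d} exp(−H_e(θ, r, α, r_α)) dr dr_α = (2π)^{(d+1)/2} · exp(−φ(α)) · exp(−U(θ)); in particular, conditioned on g(α) = 1, the marginal density of θ under exp(−H_e) is proportional to exp(−U(θ)). -/
open MeasureTheory

/-- On the slice where the temperature scaling equals one, the extended stationary density
`exp(−H_e)`, with `H_e(θ,r,α,r_α) = g(α)(U(θ) + ‖r‖²/2) + φ(α) + r_α²/2`, recovers the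
desired target distribution over `θ`: for every `α` with `g(α) = 1` and every `θ`,
`∫∫ exp(−H_e(θ,r,α,r_α)) dr dr_α = (2π)^{(d+1)/2} exp(−φ(α)) exp(−U(θ))`; in particular,
conditioned on `g(α) = 1`, the marginal density of `θ` is proportional to `exp(−U(θ))`. -/
theorem extended_density_target_marginal
    {d : ℕ} (hd : 1 ≤ d)
    (U : EuclideanSpace ℝ (Fin d) → ℝ) (hU : Measurable U)
    (g φ : ℝ → ℝ) :
    ∀ α : ℝ, g α = 1 →
      ∀ θ : EuclideanSpace ℝ (Fin d),
        ∫ rα : ℝ, ∫ r : EuclideanSpace ℝ (Fin d),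
            Real.exp (-(g α * (U θ + ‖r‖ ^ 2 / 2) + φ α + rα ^ 2 / 2))
          = (2 * Real.pi) ^ (((d : ℝ) + 1) / 2) * Real.exp (-(φ α)) * Real.exp (-(U θ)) := by
  intro α hα θ
  have h1 : ∫ x : ℝ, Real.exp (-(1/2) * x ^ 2) = (2 * Real.pi) ^ ((1:ℝ) / 2) := by
    rw [integral_gaussian, Real.sqrt_eq_rpow]
    congr 1
    ring
  have h2 : ∫ r : EuclideanSpace ℝ (Fin d), Real.exp (-(1/2) * ‖r‖ ^ 2)
      = (2 * Real.pi) ^ ((d:ℝ) / 2) := by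
    rw [GaussianFourier.integral_rexp_neg_mul_sq_norm (by norm_num)]
    rw [finrank_euclideanSpace_fin]
    congr 1
    ring
  have h3 : ∀ (x : ℝ) (r : EuclideanSpace ℝ (Fin d)),
      Real.exp (-(g α * (U θ + ‖r‖ ^ 2 / 2) + φ α + x ^ 2 / 2))
      = (Real.exp (-(φ α)) * Real.exp (-(U θ)) * Real.exp (-(1/2) * x ^ 2))
        * Real.exp (-(1/2) * ‖r‖ ^ 2) := by
    intro x r
    rw [hα, ← Real.exp_add, ← Real.exp_add, ← Real.exp_add]
    congr 1
    ring
  simp_rw [h3, integral_const_mul, h2, integral_mul_const, integral_const_mul, h1]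
  rw [add_div, Real.rpow_add (by positivity)]
  ring
end
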